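/- arXiv:2512.13548 — 8 statements merged into one kernel-verified Lean document; each statement's English description precedes it below -/
import Mathlib

section
/- For every constant threshold setting there exists a low-degree polynomial approximating the shifted sign function: there is a constant C > 0 such that for all η, Δ ∈ (0, 1/2) and all c ∈ [-1, 1], there exists a real polynomial P of degree at most ⌈C · (1/Δ) · log(1/η)⌉ satisfying |P(x)| ≤ 1 for all x ∈ [-1, 1], P(x) ∈ [1-η, 1] for all x ∈ [-1, c - Δ/2], and P(x) ∈ [-η, η] for all x ∈ [c + Δ/2, 1]. -/
open Polynomial in
lemma aux_antideriv (K : Polynomial ℝ) :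
    ∃ F : Polynomial ℝ, derivative F = K ∧ F.natDegree ≤ K.natDegree + 1 := by
  refine ⟨∑ i ∈ Finset.range (K.natDegree + 1), monomial (i + 1) (K.coeff i / (i + 1)), ?_, ?_⟩
  · rw [derivative_sum]
    conv_rhs => rw [K.as_sum_range]
    refine Finset.sum_congr rfl fun i _ => ?_
    rw [derivative_monomial]
    have : (i : ℝ) + 1 ≠ 0 := by positivity
    congr 1
    push_cast
    field_simp
  · refine natDegree_sum_le_of_forall_le _ _ fun i hi => ?_
    refine (natDegree_monomial_le _).trans ?_
    have := Finset.mem_range.1 hi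
    omega

open Polynomial in
lemma aux_kernel (n : ℕ) :
    ∃ R : Polynomial ℝ, R.natDegree ≤ 2 * n ∧
      (∀ t : ℝ, |t| ≤ 1 → (t * R.eval t) ^ 2 ≤ 1) ∧
      (∀ t : ℝ, 0 < t → t ≤ 1 / (2 * n + 1) → (2 * (2 * n + 1) / Real.pi) ^ 2 ≤ (R.eval t) ^ 2) := by
  have hodd : Odd (2 * (n : ℤ) + 1) := ⟨n, rfl⟩
  have h0 : (Chebyshev.T ℝ (2 * (n : ℤ) + 1)).eval 0 = 0 := Chebyshev.T_eval_zero_of_odd ℝ hodd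
  obtain ⟨R, hR⟩ := (dvd_iff_isRoot (p := Chebyshev.T ℝ (2 * (n : ℤ) + 1)) (a := 0)).2 h0
  rw [map_zero, sub_zero] at hR
  have hev : ∀ t : ℝ, t * R.eval t = (Chebyshev.T ℝ (2 * (n : ℤ) + 1)).eval t := by
    intro t; rw [hR]; simp
  refine ⟨R, ?_, ?_, ?_⟩
  · have hd := Chebyshev.natDegree_T ℝ (2 * (n : ℤ) + 1)
    by_cases hR0 : R = 0
    · simp [hR0]
    rw [hR, natDegree_mul X_ne_zero hR0, natDegree_X] at hd
    omega
  · intro t ht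
    rw [hev]
    exact (sq_le_one_iff_abs_le_one _).2 (Chebyshev.abs_eval_T_real_le_one _ ht)
  · intro t ht ht1
    have hpi := Real.pi_pos
    have hm : (0 : ℝ) < 2 * n + 1 := by positivity
    have hm1 : (1 : ℝ) ≤ 2 * n + 1 := by linarith [(Nat.cast_nonneg n : (0 : ℝ) ≤ n)]
    have htle : t ≤ 1 := ht1.trans (by rw [div_le_one hm]; exact hm1)
    set φ := Real.arcsin t with hφ
    have hs : Real.sin φ = t := Real.sin_arcsin (by linarith) htle
    have hφ0 : 0 < φ := Real.arcsin_pos.2 ht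
    have hφ1 : φ ≤ Real.pi / 2 := Real.arcsin_le_pi_div_two t
    have hj : 2 / Real.pi * φ ≤ t := by rw [← hs]; exact Real.mul_le_sin hφ0.le hφ1
    have hφt : t ≤ φ := by rw [← hs]; exact Real.sin_le hφ0.le
    have hmφ : (2 * n + 1) * φ ≤ Real.pi / 2 := by
      have h2 : 2 / Real.pi * φ ≤ 1 / (2 * n + 1) := hj.trans ht1
      rw [div_mul_eq_mul_div, div_le_div_iff₀ hpi hm] at h2
      linarith
    have hsin := Real.mul_le_sin (x := (2 * n + 1) * φ) (by positivity) hmφ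
    have hT : (t * R.eval t) ^ 2 = Real.sin ((2 * n + 1) * φ) ^ 2 := by
      have hc : Real.cos (Real.pi / 2 - φ) = t := by rw [Real.cos_pi_div_two_sub, hs]
      have hcn : Real.cos ((2 * n + 1) * (Real.pi / 2)) = 0 := by
        rw [Real.cos_eq_zero_iff]; exact ⟨n, by push_cast; ring⟩
      have hsn : Real.sin ((2 * n + 1) * (Real.pi / 2)) ^ 2 = 1 := by
        have := Real.sin_sq_add_cos_sq ((2 * n + 1) * (Real.pi / 2))
        rw [hcn] at this; linarith
      rw [hev]
      nth_rewrite 1 [← hc]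
      rw [Chebyshev.T_real_cos]
      push_cast
      rw [mul_sub, Real.cos_sub, hcn, zero_mul, zero_add, mul_pow, hsn, one_mul]
    have h3 : (2 * (2 * n + 1) / Real.pi * t) ^ 2 ≤ (t * R.eval t) ^ 2 := by
      rw [hT]
      refine pow_le_pow_left₀ (by positivity) (le_trans ?_ hsin) 2
      calc 2 * (2 * n + 1) / Real.pi * t ≤ 2 * (2 * n + 1) / Real.pi * φ := by gcongr
        _ = 2 / Real.pi * ((2 * n + 1) * φ) := by ring
    rw [mul_pow, mul_pow, mul_comm (t ^ 2)] at h3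
    exact le_of_mul_le_mul_right h3 (by positivity)

open Polynomial in
lemma aux_step (Δ c : ℝ) (hΔ : Δ ∈ Set.Ioo (0 : ℝ) (1 / 2)) (hc : c ∈ Set.Icc (-1 : ℝ) 1) :
    ∃ Q : Polynomial ℝ, (Q.natDegree : ℝ) ≤ 84 / Δ ∧
      (∀ x ∈ Set.Icc (-1 : ℝ) 1, Q.eval x ∈ Set.Icc (0 : ℝ) 1) ∧
      (∀ x ∈ Set.Icc (-1 : ℝ) (c - Δ / 2), 3 / 4 ≤ Q.eval x) ∧
      (∀ x ∈ Set.Icc (c + Δ / 2) (1 : ℝ), Q.eval x ≤ 1 / 4) := by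
  obtain ⟨hΔ0, hΔ1⟩ := hΔ
  obtain ⟨hc0, hc1⟩ := hc
  set n : ℕ := ⌈20 / Δ⌉₊ with hn
  have hn1 : 20 / Δ ≤ n := Nat.le_ceil _
  have hn2 : (n : ℝ) < 20 / Δ + 1 := Nat.ceil_lt_add_one (by positivity)
  obtain ⟨R, hRd, hRu, hRl⟩ := aux_kernel n
  obtain ⟨F, hF, hFd⟩ := aux_antideriv (R ^ 2)
  have hder : ∀ t, HasDerivAt (fun t => F.eval t) ((R.eval t) ^ 2) t := by
    intro t
    have := F.hasDerivAt t
    rwa [hF, eval_pow] at this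
  have hmono : Monotone (fun t => F.eval t) :=
    monotone_of_hasDerivAt_nonneg hder (fun t => sq_nonneg _)
  have htail : ∀ a b : ℝ, -1 ≤ a → b ≤ 1 → a ≤ b → (0 < a ∨ b < 0) →
      F.eval b + b⁻¹ ≤ F.eval a + a⁻¹ := by
    intro a b ha hb hab h0
    have hne : ∀ t ∈ Set.Icc a b, t ≠ 0 := by
      rintro t ⟨h1, h2⟩ rfl
      rcases h0 with h | h <;> linarith
    have hd : ∀ t ∈ Set.Icc a b, HasDerivAt (fun t => F.eval t + t⁻¹)
        ((R.eval t) ^ 2 + -(t ^ 2)⁻¹) t := fun t ht => (hder t).add (hasDerivAt_inv (hne t ht))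
    have hanti : AntitoneOn (fun t => F.eval t + t⁻¹) (Set.Icc a b) := by
      refine antitoneOn_of_deriv_nonpos (convex_Icc a b)
        (fun t ht => (hd t ht).continuousAt.continuousWithinAt)
        (fun t ht => (hd t (interior_subset ht)).differentiableAt.differentiableWithinAt) ?_
      intro t ht
      have ht' := interior_subset ht
      rw [(hd t ht').deriv]
      have h2 := hRu t (abs_le.2 ⟨ha.trans ht'.1, ht'.2.trans hb⟩)
      have h3 : 0 < t ^ 2 := by have := hne t ht'; positivity
      have : (R.eval t) ^ 2 ≤ (t ^ 2)⁻¹ := by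
        rw [← one_div, le_div_iff₀ h3]; rw [mul_pow] at h2; linarith
      linarith
    exact hanti (Set.left_mem_Icc.2 hab) (Set.right_mem_Icc.2 hab) hab
  set m : ℝ := 2 * n + 1 with hm
  have hn0 : (0 : ℝ) ≤ n := Nat.cast_nonneg n
  have hm1 : 1 ≤ m := by linarith
  have hcent : 16 / Δ ≤ F.eval 1 - F.eval (-1) := by
    have hm0 : 0 ≤ 1 / m := by positivity
    have hd : ∀ t, HasDerivAt (fun t => F.eval t - (2 * m / Real.pi) ^ 2 * t)
        ((R.eval t) ^ 2 - (2 * m / Real.pi) ^ 2 * 1) t := fun t =>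
      (hder t).sub ((hasDerivAt_id t).const_mul _)
    have hmon : MonotoneOn (fun t => F.eval t - (2 * m / Real.pi) ^ 2 * t)
        (Set.Icc 0 (1 / m)) := by
      refine monotoneOn_of_deriv_nonneg (convex_Icc _ _)
        (fun t ht => (hd t).continuousAt.continuousWithinAt)
        (fun t ht => (hd t).differentiableAt.differentiableWithinAt) ?_
      intro t ht
      rw [interior_Icc] at ht
      rw [(hd t).deriv]
      have := hRl t ht.1 ht.2.le
      linarith
    have h1 := hmon (Set.left_mem_Icc.2 hm0) (Set.right_mem_Icc.2 hm0) hm0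
    simp only [mul_zero, sub_zero] at h1
    have h2 : F.eval (1 / m) ≤ F.eval 1 := hmono (by rw [div_le_one (by linarith)]; exact hm1)
    have h3 : F.eval (-1) ≤ F.eval 0 := hmono (by norm_num)
    have h4 : (2 * m / Real.pi) ^ 2 * (1 / m) = 4 * m / Real.pi ^ 2 := by
      have := Real.pi_pos
      field_simp
      norm_num
    have h5 : 16 / Δ ≤ 4 * m / Real.pi ^ 2 := by
      have hp : Real.pi ^ 2 ≤ 10 := by
        nlinarith [Real.pi_pos, Real.pi_lt_d2]
      have : 4 * (40 / Δ) / 10 ≤ 4 * m / Real.pi ^ 2 := by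
        have : 40 / Δ ≤ m := by
          have : 40 / Δ = 2 * (20 / Δ) := by ring
          linarith
        have := Real.pi_pos
        gcongr
      refine le_trans (le_of_eq ?_) this
      ring
    linarith
  set M := F.eval 1 - F.eval (-1) with hM
  have hM0 : 0 < M := lt_of_lt_of_le (by positivity) hcent
  have hMq : 4 / Δ ≤ M / 4 := by
    have : 16 / Δ = 4 * (4 / Δ) := by ring
    linarith
  have hev : ∀ x, (C (1 / M) * (C (F.eval 1) - F.comp (C (1 / 2) * (X - C c)))).eval x
      = (F.eval 1 - F.eval ((x - c) / 2)) / M := by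
    intro x
    simp only [eval_mul, eval_C, eval_sub, eval_comp, eval_X]
    rw [show 1 / 2 * (x - c) = (x - c) / 2 by ring]
    ring
  refine ⟨C (1 / M) * (C (F.eval 1) - F.comp (C (1 / 2) * (X - C c))), ?_, ?_, ?_, ?_⟩
  · have hlin : (C (1 / 2 : ℝ) * (X - C c)).natDegree ≤ 1 :=
      (natDegree_C_mul_le _ _).trans (natDegree_X_sub_C_le c)
    have h1 : (C (1 / M) * (C (F.eval 1) - F.comp (C (1 / 2) * (X - C c)))).natDegree
        ≤ 4 * n + 1 := by
      refine (natDegree_C_mul_le _ _).trans ((natDegree_sub_le _ _).trans ?_)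
      rw [natDegree_C, natDegree_comp]
      have hp : (R ^ 2).natDegree ≤ 2 * R.natDegree := natDegree_pow_le
      have : F.natDegree * (C (1 / 2 : ℝ) * (X - C c)).natDegree ≤ F.natDegree * 1 :=
        Nat.mul_le_mul_left _ hlin
      refine max_le (by omega) (by omega)
    have h2 : ((C (1 / M) * (C (F.eval 1) - F.comp (C (1 / 2) * (X - C c)))).natDegree : ℝ)
        ≤ 4 * n + 1 := by exact_mod_cast h1
    have h3 : 2 ≤ 1 / Δ := by rw [le_div_iff₀ hΔ0]; linarith
    have h4 : 84 / Δ = 84 * (1 / Δ) := by ring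
    have h5 : 20 / Δ = 20 * (1 / Δ) := by ring
    linarith
  · intro x hx
    rw [hev]
    have h1 : F.eval ((x - c) / 2) ≤ F.eval 1 := hmono (by linarith [hx.2])
    have h2 : F.eval (-1) ≤ F.eval ((x - c) / 2) := hmono (by linarith [hx.1])
    exact ⟨div_nonneg (by linarith) hM0.le, by rw [div_le_one hM0]; linarith⟩
  · intro x hx
    rw [hev, le_div_iff₀ hM0]
    have h1 := htail (-1) (-(Δ / 4)) le_rfl (by linarith) (by linarith) (Or.inr (by linarith))
    have h2 : F.eval ((x - c) / 2) ≤ F.eval (-(Δ / 4)) := hmono (by linarith [hx.2])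
    have h3 : (-(Δ / 4))⁻¹ = - (4 / Δ) := by rw [inv_neg, inv_div]
    rw [h3] at h1
    norm_num at h1
    linarith
  · intro x hx
    rw [hev, div_le_iff₀ hM0]
    have h1 := htail (Δ / 4) 1 (by linarith) le_rfl (by linarith) (Or.inl (by linarith))
    have h2 : F.eval (Δ / 4) ≤ F.eval ((x - c) / 2) := hmono (by linarith [hx.1])
    rw [inv_div] at h1
    norm_num at h1
    linarith

/-- Binomial tail bound with Markov weight `s`. -/
lemma aux_tail (k : ℕ) (p s : ℝ) (hp0 : 0 ≤ p) (hp1 : p ≤ 1) (hs : 0 < s)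
    (hb : p * s + (1 - p) * s⁻¹ ≤ 7 / 8) (S : Finset ℕ) (hS : S ⊆ Finset.range (k + 1))
    (hSs : ∀ j ∈ S, 1 ≤ s ^ j * s⁻¹ ^ (k - j)) :
    ∑ j ∈ S, (k.choose j : ℝ) * (p ^ j * (1 - p) ^ (k - j)) ≤ (7 / 8) ^ k := by
  have hq : 0 ≤ 1 - p := by linarith
  calc ∑ j ∈ S, (k.choose j : ℝ) * (p ^ j * (1 - p) ^ (k - j))
      ≤ ∑ j ∈ S, (p * s) ^ j * ((1 - p) * s⁻¹) ^ (k - j) * (k.choose j : ℝ) := by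
        refine Finset.sum_le_sum fun j hj => ?_
        have h1 : 0 ≤ (k.choose j : ℝ) * (p ^ j * (1 - p) ^ (k - j)) := by positivity
        calc _ ≤ (k.choose j : ℝ) * (p ^ j * (1 - p) ^ (k - j)) * (s ^ j * s⁻¹ ^ (k - j)) :=
              le_mul_of_one_le_right h1 (hSs j hj)
          _ = _ := by rw [mul_pow, mul_pow]; ring
    _ ≤ ∑ j ∈ Finset.range (k + 1), (p * s) ^ j * ((1 - p) * s⁻¹) ^ (k - j) * (k.choose j : ℝ) :=
        Finset.sum_le_sum_of_subset_of_nonneg hS fun j _ _ => by positivity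
    _ = (p * s + (1 - p) * s⁻¹) ^ k := (add_pow _ _ _).symm
    _ ≤ (7 / 8) ^ k := by
        refine pow_le_pow_left₀ (by positivity) hb k

lemma aux_final :
    ∃ C : ℝ, 0 < C ∧
      ∀ η Δ : ℝ, η ∈ Set.Ioo (0 : ℝ) (1 / 2) → Δ ∈ Set.Ioo (0 : ℝ) (1 / 2) →
        ∀ c ∈ Set.Icc (-1 : ℝ) 1,
          ∃ P : Polynomial ℝ,
            P.natDegree ≤ ⌈C * (1 / Δ) * Real.log (1 / η)⌉₊ ∧
            (∀ x ∈ Set.Icc (-1 : ℝ) 1, |P.eval x| ≤ 1) ∧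
            (∀ x ∈ Set.Icc (-1 : ℝ) (c - Δ / 2), P.eval x ∈ Set.Icc (1 - η) 1) ∧
            (∀ x ∈ Set.Icc (c + Δ / 2) (1 : ℝ), P.eval x ∈ Set.Icc (-η) η) := by
  refine ⟨840, by norm_num, ?_⟩
  intro η Δ hη hΔ c hc
  obtain ⟨Q, hQd, hQ01, hQl, hQr⟩ := aux_step Δ c hΔ hc
  obtain ⟨hη0, hη1⟩ := hη
  obtain ⟨hΔ0, hΔ1⟩ := hΔ
  set L := Real.log (1 / η) with hL
  have hLl : 0.69 ≤ L := by
    have h1 : Real.log 2 ≤ L := Real.log_le_log (by norm_num) (by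
      rw [le_div_iff₀ hη0]; linarith)
    linarith [Real.log_two_gt_d9]
  set k : ℕ := ⌈8 * L⌉₊ with hk
  have hk1 : 8 * L ≤ k := Nat.le_ceil _
  have hk2 : (k : ℝ) < 8 * L + 1 := Nat.ceil_lt_add_one (by linarith)
  have hkη : (7 / 8 : ℝ) ^ k ≤ η := by
    have h1 : (7 / 8 : ℝ) ≤ Real.exp (-(1 / 8)) := by
      have := Real.add_one_le_exp (-(1 / 8) : ℝ); linarith
    calc (7 / 8 : ℝ) ^ k ≤ Real.exp (-(1 / 8)) ^ k := pow_le_pow_left₀ (by norm_num) h1 k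
      _ = Real.exp (k * (-(1 / 8))) := by rw [Real.exp_nat_mul]
      _ ≤ Real.exp (-L) := Real.exp_le_exp.2 (by linarith)
      _ = η := by rw [hL, one_div, Real.log_inv, neg_neg, Real.exp_log hη0]
  set f : ℝ → ℕ → ℝ := fun p j => (k.choose j : ℝ) * (p ^ j * (1 - p) ^ (k - j)) with hf
  set S := (Finset.range (k + 1)).filter (fun j => k ≤ 2 * j) with hS
  set S' := (Finset.range (k + 1)).filter (fun j => ¬ k ≤ 2 * j) with hS'
  have hsum : ∀ p, ∑ j ∈ S, f p j + ∑ j ∈ S', f p j = 1 := by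
    intro p
    rw [Finset.sum_filter_add_sum_filter_not]
    have := add_pow p (1 - p) k
    rw [add_sub_cancel, one_pow] at this
    rw [this]
    exact Finset.sum_congr rfl fun j _ => by simp only [hf]; ring
  have hnn : ∀ p, 0 ≤ p → p ≤ 1 → ∀ T : Finset ℕ, 0 ≤ ∑ j ∈ T, f p j := by
    intro p h0 h1 T
    have : 0 ≤ 1 - p := by linarith
    exact Finset.sum_nonneg fun j _ => by simp only [hf]; positivity
  have hsmall : ∀ p, 0 ≤ p → p ≤ 1 / 4 → ∑ j ∈ S, f p j ≤ η := by
    intro p h0 h1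
    refine (aux_tail k p 2 h0 (by linarith) (by norm_num) (by norm_num; linarith) S
      (Finset.filter_subset _ _) ?_).trans hkη
    intro j hj
    have hj2 := (Finset.mem_filter.1 hj).2
    rw [inv_pow, ← div_eq_mul_inv, one_le_div (by positivity)]
    exact pow_le_pow_right₀ (by norm_num) (by omega)
  have hlarge : ∀ p, 3 / 4 ≤ p → p ≤ 1 → ∑ j ∈ S', f p j ≤ η := by
    intro p h0 h1
    refine (aux_tail k p 2⁻¹ (by linarith) h1 (by norm_num) (by norm_num; linarith) S'
      (Finset.filter_subset _ _) ?_).trans hkη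
    intro j hj
    have hj2 := (Finset.mem_filter.1 hj).2
    rw [inv_inv, inv_pow, mul_comm, ← div_eq_mul_inv, one_le_div (by positivity)]
    exact pow_le_pow_right₀ (by norm_num) (by omega)
  have hev : ∀ x, (∑ j ∈ S, Polynomial.C (k.choose j : ℝ) * (Q ^ j * (1 - Q) ^ (k - j))).eval x
      = ∑ j ∈ S, f (Q.eval x) j := by
    intro x
    rw [Polynomial.eval_finsetSum]
    refine Finset.sum_congr rfl fun j _ => ?_
    simp [hf]
  obtain ⟨hc0, hc1⟩ := hc
  refine ⟨∑ j ∈ S, Polynomial.C (k.choose j : ℝ) * (Q ^ j * (1 - Q) ^ (k - j)), ?_, ?_, ?_, ?_⟩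
  · have h1 : (∑ j ∈ S, Polynomial.C (k.choose j : ℝ) * (Q ^ j * (1 - Q) ^ (k - j))).natDegree
        ≤ k * Q.natDegree := by
      refine Polynomial.natDegree_sum_le_of_forall_le _ _ fun j hj => ?_
      have hjk : j ≤ k := by
        have := Finset.mem_range.1 (Finset.mem_filter.1 hj).1
        omega
      refine (Polynomial.natDegree_C_mul_le _ _).trans (Polynomial.natDegree_mul_le.trans ?_)
      have e1 : (Q ^ j).natDegree ≤ j * Q.natDegree := Polynomial.natDegree_pow_le
      have e2 : ((1 - Q) ^ (k - j)).natDegree ≤ (k - j) * (1 - Q).natDegree :=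
        Polynomial.natDegree_pow_le
      have e3 : (1 - Q).natDegree ≤ Q.natDegree := by
        refine (Polynomial.natDegree_sub_le _ _).trans ?_
        simp
      have e4 : (k - j) * (1 - Q).natDegree ≤ (k - j) * Q.natDegree := Nat.mul_le_mul_left _ e3
      calc _ ≤ j * Q.natDegree + (k - j) * Q.natDegree := by omega
        _ = (j + (k - j)) * Q.natDegree := by ring
        _ = k * Q.natDegree := by rw [Nat.add_sub_cancel' hjk]
    refine h1.trans ?_
    have h2 : ((k * Q.natDegree : ℕ) : ℝ) ≤ 840 * (1 / Δ) * L := by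
      push_cast
      calc (k : ℝ) * Q.natDegree ≤ (10 * L) * (84 / Δ) := by
            gcongr
            linarith
        _ = _ := by ring
    exact_mod_cast h2.trans (Nat.le_ceil _)
  · intro x hx
    rw [hev]
    obtain ⟨h0, h1⟩ := hQ01 x hx
    have a := hnn _ h0 h1 S
    have b := hnn _ h0 h1 S'
    have d := hsum (Q.eval x)
    rw [abs_le]; constructor <;> linarith
  · intro x hx
    rw [hev]
    by_cases hx1 : x ≤ 1
    · obtain ⟨h0, h1⟩ := hQ01 x ⟨hx.1, hx1⟩
      have b := hnn _ h0 h1 S'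
      have d := hsum (Q.eval x)
      have e := hlarge _ (hQl x hx) h1
      constructor <;> linarith
    · linarith [hx.2]
  · intro x hx
    rw [hev]
    obtain ⟨h0, h1⟩ := hQ01 x ⟨by linarith [hx.1], hx.2⟩
    have a := hnn _ h0 h1 S
    have e := hsmall _ h0 (hQr x hx)
    constructor <;> linarith

/-- There is a constant `C > 0` such that for all `η, Δ ∈ (0, 1/2)` and
`c ∈ [-1, 1]` there exists a real polynomial `P` of degree at most
`⌈C (1/Δ) log(1/η)⌉` with `|P(x)| ≤ 1` on `[-1, 1]`, `P(x) ∈ [1-η, 1]` on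
`[-1, c - Δ/2]`, and `P(x) ∈ [-η, η]` on `[c + Δ/2, 1]`. -/
theorem shifted_sign_polynomial_approximation :
    ∃ C : ℝ, 0 < C ∧
      ∀ η Δ : ℝ, η ∈ Set.Ioo (0 : ℝ) (1 / 2) → Δ ∈ Set.Ioo (0 : ℝ) (1 / 2) →
        ∀ c ∈ Set.Icc (-1 : ℝ) 1,
          ∃ P : Polynomial ℝ,
            P.natDegree ≤ ⌈C * (1 / Δ) * Real.log (1 / η)⌉₊ ∧
            (∀ x ∈ Set.Icc (-1 : ℝ) 1, |P.eval x| ≤ 1) ∧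
            (∀ x ∈ Set.Icc (-1 : ℝ) (c - Δ / 2), P.eval x ∈ Set.Icc (1 - η) 1) ∧
            (∀ x ∈ Set.Icc (c + Δ / 2) (1 : ℝ), P.eval x ∈ Set.Icc (-η) η) := by
  exact aux_final
end

section
/- For every constant threshold setting there exists a low-degree even polynomial approximating the rectangle function: there is a constant C > 0 such that for all η, Δ ∈ (0, 1/2) and all c ∈ [-1, 1] with c > Δ/2, there exists a real polynomial P of degree at most ⌈C · (1/Δ) · log(1/η)⌉ such that P is even (P(-x) = P(x) for all x), |P(x)| ≤ 1 for all x ∈ [-1, 1], P(x) ∈ [1-η, 1] for all x ∈ [-c + Δ/2, c - Δ/2], and P(x) ∈ [-η, η] for all x ∈ [-1, -c - Δ/2] ∪ [c + Δ/2, 1]. -/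
open Polynomial

/-- amplification -/
theorem amp (k : ℕ) : ∃ A : ℝ[X], A.natDegree ≤ 2*k+1 ∧ (∀ y ∈ Set.Icc (0:ℝ) 1, A.eval y ∈ Set.Icc (0:ℝ) 1) ∧
   (∀ y ∈ Set.Icc (0:ℝ) (1/16), A.eval y ≤ (1/4)^(k+1)) ∧
   (∀ y ∈ Set.Icc (15/16:ℝ) 1, 1 - (1/4)^(k+1) ≤ A.eval y) := by
  have tot : ∀ y : ℝ, ∑ j ∈ Finset.range (2*k+2), y^j * (1-y)^(2*k+1-j) * ((2*k+1).choose j : ℝ) = 1 := by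
    intro y
    rw [← add_pow]; simp
  have key : ∀ (s : Finset ℕ) (f : ℕ → ℝ), s ⊆ Finset.range (2*k+2) →
      (∀ j ∈ s, f j ≤ (1/16)^(k+1)) → 
      ∑ j ∈ s, f j * ((2*k+1).choose j : ℝ) ≤ (1/4)^(k+1) := by
    intro s f hs hf
    calc _ ≤ ∑ j ∈ s, (1/16:ℝ)^(k+1) * ((2*k+1).choose j : ℝ) := by
          gcongr with j hj; exact hf j hj
      _ ≤ ∑ j ∈ Finset.range (2*k+2), (1/16:ℝ)^(k+1) * ((2*k+1).choose j : ℝ) := by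
          apply Finset.sum_le_sum_of_subset_of_nonneg hs
          intros; positivity
      _ = (1/16:ℝ)^(k+1) * 2^(2*k+1) := by
          rw [← Finset.mul_sum]
          congr 1
          exact_mod_cast Nat.sum_range_choose (2*k+1)
      _ ≤ (1/16:ℝ)^(k+1) * 2^(2*(k+1)) := by
          gcongr
          · norm_num
          · omega
      _ = _ := by
          rw [pow_mul, ← mul_pow]; norm_num
  have spl := fun y : ℝ => Finset.sum_filter_add_sum_filter_not (Finset.range (2*k+2)) (fun j => k < j)
      (fun j => y^j * (1-y)^(2*k+1-j) * ((2*k+1).choose j : ℝ))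
  have nn : ∀ y ∈ Set.Icc (0:ℝ) 1, ∀ j, 0 ≤ y^j * (1-y)^(2*k+1-j) * ((2*k+1).choose j : ℝ) := by
    intro y hy j
    have h1 := hy.1
    have h2 : 0 ≤ 1 - y := by linarith [hy.2]
    positivity
  have ev : ∀ y : ℝ, (∑ j ∈ Finset.range (2*k+2) with k < j, (X:ℝ[X])^j * (1-X)^(2*k+1-j) * C ((2*k+1).choose j : ℝ)).eval y = ∑ j ∈ Finset.range (2*k+2) with k < j, y^j * (1-y)^(2*k+1-j) * ((2*k+1).choose j : ℝ) := by
    intro y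
    simp [eval_finsetSum]
  refine ⟨∑ j ∈ Finset.range (2*k+2) with k < j, X^j * (1-X)^(2*k+1-j) * C ((2*k+1).choose j : ℝ), ?_, ?_, ?_, ?_⟩
  · apply natDegree_sum_le_of_forall_le
    intro j hj
    simp at hj
    have : ((1:ℝ[X]) - X).natDegree ≤ 1 := by compute_degree
    have h2 : ((1-X:ℝ[X])^(2*k+1-j)).natDegree ≤ (2*k+1-j) := by
      simpa using natDegree_pow_le_of_le (2*k+1-j) this
    have h3 : ((X:ℝ[X])^j).natDegree ≤ j := by simp
    refine (natDegree_mul_C_le _ _).trans ((natDegree_mul_le_of_le h3 h2).trans (by omega))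
  · intro y hy
    rw [ev]
    have a := Finset.sum_nonneg (s := Finset.range (2*k+2) |>.filter (fun j => k < j)) (fun j _ => nn y hy j)
    have b := Finset.sum_nonneg (s := Finset.range (2*k+2) |>.filter (fun j => ¬ k < j)) (fun j _ => nn y hy j)
    have := spl y
    rw [tot] at this
    exact ⟨a, by linarith⟩
  · intro y hy
    rw [ev]
    apply key _ _ (Finset.filter_subset _ _)
    intro j hj
    simp at hj
    have h0 := hy.1
    have h1 := hy.2
    calc y^j * (1-y)^(2*k+1-j) ≤ y^j * 1 := by
          gcongr; exact pow_le_one₀ (by linarith) (by linarith)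
      _ ≤ y^(k+1) := by
          rw [mul_one]; exact pow_le_pow_of_le_one h0 (by linarith) hj.2
      _ ≤ _ := by gcongr
  · intro y hy
    rw [ev]
    have := spl y
    rw [tot] at this
    have h3 : ∑ j ∈ Finset.range (2*k+2) with ¬ k < j, y^j * (1-y)^(2*k+1-j) * ((2*k+1).choose j : ℝ) ≤ (1/4)^(k+1) := by
      apply key _ _ (Finset.filter_subset _ _)
      intro j hj
      simp at hj
      have h0 := hy.1
      have h1 := hy.2
      calc y^j * (1-y)^(2*k+1-j) ≤ 1 * (1-y)^(2*k+1-j) := by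
            have : 0 ≤ 1 - y := by linarith
            gcongr; exact pow_le_one₀ (by linarith) (by linarith)
        _ ≤ (1-y)^(k+1) := by
            rw [one_mul]; exact pow_le_pow_of_le_one (by linarith) (by linarith) (by omega)
        _ ≤ _ := by gcongr <;> linarith
    linarith

theorem kern (n : ℕ) (hn : 1 ≤ n) : ∃ V : ℝ[X], V.natDegree ≤ n ∧
   (∀ y ∈ Set.Ioo (0:ℝ) 1, 0 ≤ V.eval (y^2) ∧ V.eval (y^2) ≤ 2 / y^2) ∧
   (∀ y ∈ Set.Ioo (0:ℝ) (1/n), (n:ℝ)^2/2 ≤ V.eval (y^2)) := by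
  have main : ∀ y ∈ Set.Ioo (0:ℝ) 1, (((1 - Chebyshev.T ℝ n).comp (1 - 2 * X)).divX).eval (y^2) * y^2 = 2 * Real.sin (n * Real.arcsin y)^2 := by
    intro y hy
    have h := congrArg (eval (y^2)) (divX_mul_X_add ((1 - Chebyshev.T ℝ n).comp (1 - 2 * X)))
    have h0 : ((1 - Chebyshev.T ℝ n).comp (1 - 2 * X)).coeff 0 = 0 := by
      rw [coeff_zero_eq_eval_zero]; simp [eval_comp]
    rw [h0] at h
    simp only [eval_add, eval_mul, eval_X, eval_C, add_zero, eval_comp, eval_sub, eval_one, eval_ofNat] at h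
    rw [h]
    have hs : Real.sin (Real.arcsin y) = y := Real.sin_arcsin (by linarith [hy.1]) hy.2.le
    have : 1 - 2 * y^2 = Real.cos (2 * Real.arcsin y) := by
      rw [Real.cos_two_mul, Real.cos_sq', hs]; ring
    rw [this, Chebyshev.T_real_cos]
    have : ((n:ℤ):ℝ) * (2 * Real.arcsin y) = 2 * (n * Real.arcsin y) := by push_cast; ring
    rw [this, Real.cos_two_mul, Real.cos_sq']; ring
  refine ⟨((1 - Chebyshev.T ℝ n).comp (1 - 2 * X)).divX, ?_, ?_, ?_⟩
  · rw [natDegree_divX_eq_natDegree_tsub_one]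
    refine (Nat.sub_le _ _).trans ?_
    refine natDegree_comp_le.trans ?_
    have h1 : ((1:ℝ[X]) - 2 * X).natDegree ≤ 1 := by compute_degree
    have h2 : (1 - Chebyshev.T ℝ n).natDegree ≤ n := by
      refine (natDegree_sub_le _ _).trans ?_
      simp
    calc _ ≤ n * 1 := Nat.mul_le_mul h2 h1
      _ = n := by simp
  · intro y hy
    have h := main y hy
    have hy2 : 0 < y^2 := by have := hy.1; positivity
    have := Real.sin_sq_le_one (n * Real.arcsin y)
    refine ⟨?_, ?_⟩
    · by_contra hc
      push Not at hc
      nlinarith [sq_nonneg (Real.sin (n * Real.arcsin y))]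
    · rw [le_div_iff₀ hy2, h]; linarith
  · intro y hy
    have hn' : (1:ℝ) ≤ n := by exact_mod_cast hn
    have hy1 : y < 1 := hy.2.trans_le (by rw [div_le_one (by linarith)]; exact hn')
    have h := main y ⟨hy.1, hy1⟩
    have hs : Real.sin (Real.arcsin y) = y := Real.sin_arcsin (by linarith [hy.1]) hy1.le
    have p0 : 0 ≤ Real.arcsin y := Real.arcsin_nonneg.2 hy.1.le
    have p1 := Real.arcsin_le_pi_div_two y
    have p2 := Real.mul_le_sin p0 p1
    have p3 := Real.sin_le p0
    rw [hs] at p2 p3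
    have hpi := Real.pi_pos
    have hpi4 := Real.pi_le_four
    have hny : n * y ≤ 1 := by
      have := hy.2.le
      rw [le_div_iff₀ (by linarith)] at this; linarith
    have q : (n:ℝ) * Real.arcsin y ≤ Real.pi / 2 := by
      have : n * (2 / Real.pi * Real.arcsin y) ≤ 1 := (mul_le_mul_of_nonneg_left p2 (by linarith)).trans hny
      have e : n * Real.arcsin y = n * (2 / Real.pi * Real.arcsin y) * (Real.pi / 2) := by field_simp
      rw [e]; nlinarith
    have r := Real.mul_le_sin (by positivity : 0 ≤ (n:ℝ) * Real.arcsin y) q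
    have s : (n * y) / 2 ≤ Real.sin (n * Real.arcsin y) := by
      refine le_trans ?_ r
      have : 1/2 ≤ 2 / Real.pi := by rw [le_div_iff₀ hpi]; linarith
      calc n * y / 2 = 1/2 * (n * y) := by ring
        _ ≤ _ := by have := hy.1; gcongr
    have hy2 : 0 < y^2 := by have := hy.1; positivity
    have s2 : (n * y / 2)^2 ≤ Real.sin (n * Real.arcsin y)^2 := by
      have := hy.1
      gcongr
    refine le_of_mul_le_mul_right ?_ hy2
    rw [h]; nlinarith

theorem step (n : ℕ) (hn : 1 ≤ n) : ∃ S : ℝ[X], S.natDegree ≤ 2 * n + 1 ∧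
   (∀ y, S.eval (-y) = - S.eval y) ∧ MonotoneOn (fun y => S.eval y) (Set.Icc 0 1) ∧
   (n:ℝ)/2 ≤ S.eval 1 ∧ ∀ d ∈ Set.Ioc (0:ℝ) 1, S.eval 1 - S.eval d ≤ 2 / d := by
  obtain ⟨V, hV, h1, h2⟩ := kern n hn
  obtain ⟨S, hS⟩ : ∃ S : ℝ[X], S = ∑ i ∈ Finset.range (n+1), C (V.coeff i / (2*i+1)) * X^(2*i+1) := ⟨_, rfl⟩
  have ev : ∀ y, S.eval y = ∑ i ∈ Finset.range (n+1), V.coeff i / (2*i+1) * y^(2*i+1) := by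
    intro y; simp [hS, eval_finsetSum]
  have der : ∀ y, deriv (fun y => S.eval y) y = V.eval (y^2) := by
    intro y
    rw [Polynomial.deriv, hS, derivative_sum, eval_finsetSum, eval_eq_sum_range' (Nat.lt_succ_of_le hV)]
    apply Finset.sum_congr rfl
    intro i _
    simp
    field_simp
    rw [pow_mul]
  have odd : ∀ y, S.eval (-y) = - S.eval y := by
    intro y
    rw [ev, ev, ← Finset.sum_neg_distrib]
    apply Finset.sum_congr rfl
    intro i _
    rw [Odd.neg_pow ⟨i, rfl⟩]; ring
  have mono : MonotoneOn (fun y => S.eval y) (Set.Icc 0 1) := by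
    apply monotoneOn_of_deriv_nonneg (convex_Icc _ _) S.continuous.continuousOn S.differentiable.differentiableOn
    intro y hy
    rw [interior_Icc] at hy
    rw [der]; exact (h1 y hy).1
  have hn' : (1:ℝ) ≤ n := by exact_mod_cast hn
  have hn1 : 1/(n:ℝ) ≤ 1 := by rw [div_le_one (by linarith)]; exact hn'
  refine ⟨S, ?_, odd, mono, ?_, ?_⟩
  · rw [hS]
    apply natDegree_sum_le_of_forall_le
    intro i hi
    simp at hi
    refine (natDegree_C_mul_X_pow_le _ _).trans (by omega)
  · have z : S.eval 0 = 0 := by have := odd 0; simp at this; linarith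
    have p : (0:ℝ) ≤ 1/n := by positivity
    have a := (convex_Icc (0:ℝ) (1/n)).mul_sub_le_image_sub_of_le_deriv (f := fun y => S.eval y) (C := (n:ℝ)^2/2) S.continuous.continuousOn S.differentiable.differentiableOn (by
      intro y hy
      rw [interior_Icc] at hy
      rw [der]; exact h2 y hy) 0 ⟨le_rfl, p⟩ (1/n) ⟨p, le_rfl⟩ p
    have b := mono (a := 1/n) ⟨p, hn1⟩ (b := 1) ⟨by norm_num, le_rfl⟩ hn1
    simp only [z, sub_zero] at a b
    have e : (n:ℝ)^2/2 * (1/n) = n/2 := by field_simp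
    linarith
  · intro d hd
    have hd0 := hd.1
    have hne : ∀ y ∈ Set.Icc d 1, y ≠ 0 := fun y hy => by linarith [hy.1]
    have a : AntitoneOn (fun y => S.eval y + 2 * y⁻¹) (Set.Icc d 1) := by
      apply antitoneOn_of_deriv_nonpos (convex_Icc _ _)
      · exact S.continuous.continuousOn.add (continuousOn_const.mul (continuousOn_id.inv₀ hne))
      · intro y hy
        rw [interior_Icc] at hy
        have : y ≠ 0 := by linarith [hy.1]
        exact (S.differentiableAt.add ((differentiableAt_id.inv this).const_mul 2)).differentiableWithinAt
      · intro y hy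
        rw [interior_Icc] at hy
        have : y ≠ 0 := by linarith [hy.1]
        have hD := (S.differentiableAt (x := y)).hasDerivAt.add ((hasDerivAt_inv this).const_mul 2)
        rw [der] at hD
        have := (h1 y ⟨by linarith [hy.1], hy.2⟩).2
        have e : (2:ℝ) / y^2 = - (2 * -(y^2)⁻¹) := by ring
        erw [hD.deriv]
        linarith
    have := a ⟨le_rfl, hd.2⟩ ⟨hd.2, le_rfl⟩ hd.2
    simp only at this
    rw [div_eq_mul_inv]
    norm_num at this
    linarith

/-- There is a constant `C > 0` such that for all `η, Δ ∈ (0, 1/2)` and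
`c ∈ [-1, 1]` with `c > Δ/2`, there exists an even real polynomial `P` of degree at most
`⌈C (1/Δ) log(1/η)⌉` with `|P(x)| ≤ 1` on `[-1, 1]`, `P(x) ∈ [1-η, 1]` on
`[-c + Δ/2, c - Δ/2]`, and `P(x) ∈ [-η, η]` on `[-1, -c - Δ/2] ∪ [c + Δ/2, 1]`. -/
theorem rectangle_polynomial_approximation :
    ∃ C : ℝ, 0 < C ∧
      ∀ η Δ : ℝ, η ∈ Set.Ioo (0 : ℝ) (1 / 2) → Δ ∈ Set.Ioo (0 : ℝ) (1 / 2) →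
        ∀ c ∈ Set.Icc (-1 : ℝ) 1, Δ / 2 < c →
          ∃ P : Polynomial ℝ,
            P.natDegree ≤ ⌈C * (1 / Δ) * Real.log (1 / η)⌉₊ ∧
            (∀ x : ℝ, P.eval (-x) = P.eval x) ∧
            (∀ x ∈ Set.Icc (-1 : ℝ) 1, |P.eval x| ≤ 1) ∧
            (∀ x ∈ Set.Icc (-c + Δ / 2) (c - Δ / 2), P.eval x ∈ Set.Icc (1 - η) 1) ∧
            (∀ x ∈ Set.Icc (-1 : ℝ) (-c - Δ / 2) ∪ Set.Icc (c + Δ / 2) (1 : ℝ),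
              P.eval x ∈ Set.Icc (-η) η) := by
  refine ⟨10000, by norm_num, ?_⟩
  intro η Δ hη hΔ c hc hcΔ
  have hη0 := hη.1
  have hη1 := hη.2
  have hΔ0 := hΔ.1
  have hΔ1 := hΔ.2
  have hc1 := hc.2
  obtain ⟨L, hL⟩ : ∃ L, L = Real.log (1 / η) := ⟨_, rfl⟩
  have hLη : Real.exp (-L) = η := by
    rw [hL, one_div, Real.log_inv, neg_neg, Real.exp_log hη0]
  have hL1 : 1/2 ≤ L := by
    have h2 : Real.log 2 ≤ L := by
      rw [hL]; apply Real.log_le_log (by norm_num)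
      rw [le_div_iff₀ hη0]; linarith
    linarith [Real.log_two_gt_d9]
  have hk1 := Nat.le_ceil L
  have hk2 := (Nat.ceil_lt_add_one (by linarith : 0 ≤ L)).le
  have hn1 := Nat.le_ceil (256 / Δ)
  have hn2 := (Nat.ceil_lt_add_one (by positivity : 0 ≤ 256 / Δ)).le
  have hnpos : 1 ≤ ⌈256 / Δ⌉₊ := Nat.one_le_ceil_iff.2 (by positivity)
  obtain ⟨S, Sdeg, Sodd, Smono, Sbig, Stail⟩ := step ⌈256 / Δ⌉₊ hnpos
  obtain ⟨A, Adeg, A01, Alow, Ahigh⟩ := amp ⌈L⌉₊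
  generalize ⌈L⌉₊ = k at *
  generalize ⌈256 / Δ⌉₊ = n at *
  have hpow : (1/4:ℝ)^(k+1) ≤ η := by
    have e1 : (1/4:ℝ) ≤ Real.exp (-1) := by
      rw [Real.exp_neg, one_div]
      apply inv_anti₀ (Real.exp_pos _)
      linarith [Real.exp_one_lt_d9]
    calc (1/4:ℝ)^(k+1) ≤ (1/4:ℝ)^k := pow_le_pow_of_le_one (by norm_num) (by norm_num) (by omega)
      _ ≤ (Real.exp (-1))^k := by gcongr
      _ = Real.exp (-k) := by rw [← Real.exp_nat_mul]; congr 1; ring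
      _ ≤ Real.exp (-L) := by apply Real.exp_le_exp.2; linarith
      _ = η := hLη
  have S0 : S.eval 0 = 0 := by have := Sodd 0; simp at this; linarith
  have mono : ∀ a b : ℝ, -1 ≤ a → a ≤ b → b ≤ 1 → S.eval a ≤ S.eval b := by
    have m : ∀ a b : ℝ, 0 ≤ a → a ≤ b → b ≤ 1 → S.eval a ≤ S.eval b := fun a b h1 h2 h3 =>
      Smono ⟨h1, h2.trans h3⟩ ⟨h1.trans h2, h3⟩ h2
    intro a b h1 h2 h3
    rcases le_total 0 a with ha | ha
    · exact m a b ha h2 h3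
    · have u := m 0 (-a) le_rfl (by linarith) (by linarith)
      rcases le_total 0 b with hb | hb
      · have v := m 0 b le_rfl hb h3
        rw [Sodd] at u; linarith
      · have v := m (-b) (-a) (by linarith) (by linarith) (by linarith)
        rw [Sodd, Sodd] at v; linarith
  have tail := Stail (Δ/4) ⟨by linarith, by linarith⟩
  have hs : 0 < S.eval 1 := by
    have : (1:ℝ) ≤ n := by exact_mod_cast hnpos
    linarith
  have tail' : S.eval 1 - S.eval (Δ/4) ≤ S.eval 1 / 16 := by
    have e1 : 2 / (Δ/4) = 8 * (1/Δ) := by field_simp; norm_num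
    have e2 : 256 / Δ = 256 * (1/Δ) := by ring
    rw [e1] at tail
    rw [e2] at hn1
    linarith
  obtain ⟨Q, hQ⟩ : ∃ Q : ℝ[X], Q = C (1/(2*S.eval 1)) * (S.comp (C (1/2) * X + C (c/2)) - S.comp (C (1/2) * X + C (-c/2))) := ⟨_, rfl⟩
  have Qev : ∀ x, Q.eval x = (S.eval ((x+c)/2) - S.eval ((x-c)/2)) / (2 * S.eval 1) := by
    intro x
    have e1 : 1/2 * x + c/2 = (x+c)/2 := by ring
    have e2 : 1/2 * x + -c/2 = (x-c)/2 := by ring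
    rw [hQ]
    simp only [eval_mul, eval_C, eval_sub, eval_comp, eval_add, eval_X, e1, e2]
    ring
  have Qeven : ∀ x, Q.eval (-x) = Q.eval x := by
    intro x
    have e1 : (-x+c)/2 = -((x-c)/2) := by ring
    have e2 : (-x-c)/2 = -((x+c)/2) := by ring
    rw [Qev, Qev, e1, e2, Sodd, Sodd]; ring
  have Qdeg : Q.natDegree ≤ 2*n+1 := by
    have h : ∀ b : ℝ, (S.comp (C (1/2) * X + C b)).natDegree ≤ 2*n+1 := by
      intro b
      refine natDegree_comp_le.trans ?_
      have : (C (1/2:ℝ) * X + C b).natDegree ≤ 1 := by compute_degree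
      calc _ ≤ (2*n+1) * 1 := Nat.mul_le_mul Sdeg this
        _ = _ := by ring
    rw [hQ]
    refine (natDegree_C_mul_le _ _).trans ((natDegree_sub_le _ _).trans (max_le (h _) (h _)))
  have Q01 : ∀ x ∈ Set.Icc (-1:ℝ) 1, Q.eval x ∈ Set.Icc (0:ℝ) 1 := by
    intro x hx
    have h1 := hx.1
    have h2 := hx.2
    have a := mono ((x-c)/2) ((x+c)/2) (by linarith) (by linarith) (by linarith)
    have b := mono ((x+c)/2) 1 (by linarith) (by linarith) le_rfl
    have d := mono (-1) ((x-c)/2) le_rfl (by linarith) (by linarith)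
    rw [Sodd] at d
    rw [Qev]
    exact ⟨div_nonneg (by linarith) (by linarith), by rw [div_le_one (by linarith)]; linarith⟩
  have Qout : ∀ x ∈ Set.Icc (c + Δ/2) 1, A.eval (Q.eval x) ∈ Set.Icc (-η) η := by
    intro x hx
    have h1 := hx.1
    have h2 := hx.2
    have q := Q01 x ⟨by linarith, h2⟩
    have b := mono ((x+c)/2) 1 (by linarith) (by linarith) le_rfl
    have d := mono (Δ/4) ((x-c)/2) (by linarith) (by linarith) (by linarith)
    have q2 : Q.eval x ≤ 1/16 := by
      rw [Qev, div_le_iff₀ (by linarith)]; linarith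
    have := (A01 _ q).1
    exact ⟨by linarith, (Alow _ ⟨q.1, q2⟩).trans hpow⟩
  refine ⟨A.comp Q, ?_, ?_, ?_, ?_, ?_⟩
  · refine natDegree_comp_le.trans ?_
    refine (Nat.mul_le_mul Adeg Qdeg).trans ?_
    rw [← Nat.cast_le (α := ℝ)]
    refine le_trans ?_ (Nat.le_ceil _)
    rw [← hL]
    push_cast
    have e2 : 256 / Δ = 256 * (1/Δ) := by ring
    rw [e2] at hn2
    have hD : 2 ≤ 1/Δ := by rw [le_div_iff₀ hΔ0]; linarith
    generalize 1/Δ = D at *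
    calc (2*(k:ℝ)+1) * (2*n+1) ≤ (8*L) * (514*D) := by
          apply mul_le_mul <;> first | positivity | linarith
      _ ≤ 10000 * D * L := by nlinarith [mul_nonneg (by linarith : 0 ≤ D) (by linarith : 0 ≤ L)]
  · intro x
    rw [eval_comp, eval_comp, Qeven]
  · intro x hx
    rw [eval_comp]
    have := A01 _ (Q01 x hx)
    rw [abs_le]; exact ⟨by linarith [this.1], this.2⟩
  · intro x hx
    rw [eval_comp]
    have h1 := hx.1
    have h2 := hx.2
    have q := Q01 x ⟨by linarith, by linarith⟩
    have b := mono (Δ/4) ((x+c)/2) (by linarith) (by linarith) (by linarith)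
    have d := mono (Δ/4) (-((x-c)/2)) (by linarith) (by linarith) (by linarith)
    rw [Sodd] at d
    have q2 : 15/16 ≤ Q.eval x := by
      rw [Qev, le_div_iff₀ (by linarith)]; linarith
    have := Ahigh _ ⟨q2, q.2⟩
    exact ⟨by linarith, (A01 _ q).2⟩
  · rintro x (hx | hx)
    · rw [eval_comp, ← Qeven]
      exact Qout (-x) ⟨by linarith [hx.2], by linarith [hx.1]⟩
    · rw [eval_comp]; exact Qout x hx
end

section
/- Let E be a finite-dimensional complex inner product space, H : E → E a self-adjoint linear operator all of whose eigenvalues lie in [-1, 1], with orthonormal eigenbasis (v_i) and eigenvalues (λ_i), and let ψ ∈ E be a unit vector. Let c ∈ [-1,1], Δ > 0, η ∈ [0,1], and let P be a real polynomial with P(x) ∈ [1-η, 1] for all x ∈ [-1, c - Δ/2] and P(x) ∈ [-η, η] for all x ∈ [c + Δ/2, 1]. Assume no eigenvalue of H lies in the open interval (c - Δ/2, c + Δ/2), and let λ₀ be an eigenvalue with λ₀ ≤ c - Δ/2 and unit eigenvector v₀, with overlap χ = |⟨v₀, ψ⟩|. Then the (real) expectation value ⟨ψ, P(H)ψ⟩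 satisfies ⟨ψ, P(H)ψ⟩ ≥ χ²(1 - η) - (1 - χ²)η. -/
open scoped InnerProductSpace

/-- (Case (2) of the dequantized GSEE analysis.)
With `H` self-adjoint, orthonormal eigenbasis `v` and eigenvalues `lam ∈ [-1,1]`, unit
vector `ψ`, a polynomial `P` approximating the shifted sign function with threshold `c`,
gap `Δ` and error `η`, no eigenvalue in `(c - Δ/2, c + Δ/2)`, and an eigenvalue
`lam i₀ ≤ c - Δ/2` whose eigenvector has overlap `χ` with `ψ`, the real expectation value
satisfies `⟨ψ, P(H)ψ⟩ ≥ χ²(1 - η) - (1 - χ²)η`. -/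
theorem expectation_ge_of_low_eigenvalue
    {E : Type*} [NormedAddCommGroup E] [InnerProductSpace ℂ E] [FiniteDimensional ℂ E]
    (H : E →ₗ[ℂ] E) (hH : ∀ x y : E, ⟪H x, y⟫_ℂ = ⟪x, H y⟫_ℂ)
    {ι : Type*} [Fintype ι] (v : OrthonormalBasis ι ℂ E) (lam : ι → ℝ)
    (hEig : ∀ i, H (v i) = (lam i : ℂ) • v i)
    (hspec : ∀ i, lam i ∈ Set.Icc (-1 : ℝ) 1)
    (ψ : E) (hψ : ‖ψ‖ = 1)
    (c Δ η : ℝ) (hc : c ∈ Set.Icc (-1 : ℝ) 1) (hΔ : 0 < Δ) (hη : η ∈ Set.Icc (0 : ℝ) 1)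
    (P : Polynomial ℝ)
    (hP₁ : ∀ x ∈ Set.Icc (-1 : ℝ) (c - Δ / 2), P.eval x ∈ Set.Icc (1 - η) 1)
    (hP₂ : ∀ x ∈ Set.Icc (c + Δ / 2) (1 : ℝ), P.eval x ∈ Set.Icc (-η) η)
    (hgap : ∀ i, lam i ∉ Set.Ioo (c - Δ / 2) (c + Δ / 2))
    (i₀ : ι) (hi₀ : lam i₀ ≤ c - Δ / 2)
    (χ : ℝ) (hχ : χ = ‖⟪v i₀, ψ⟫_ℂ‖) :
    χ ^ 2 * (1 - η) - (1 - χ ^ 2) * η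
      ≤ (⟪ψ, (Polynomial.aeval H (P.map (algebraMap ℝ ℂ))) ψ⟫_ℂ).re := by
  have hPv : ∀ i, (Polynomial.aeval H (P.map (algebraMap ℝ ℂ))) (v i)
      = ((P.eval (lam i) : ℝ) : ℂ) • v i := by
    intro i
    have h : Module.End.HasEigenvector H (lam i : ℂ) (v i) :=
      ⟨Module.End.mem_eigenspace_iff.mpr (hEig i), v.orthonormal.ne_zero i⟩
    rw [Module.End.aeval_apply_of_hasEigenvector h]
    congr 1
    exact Polynomial.eval_map_apply (algebraMap ℝ ℂ) (lam i)
  have hexp : (⟪ψ, (Polynomial.aeval H (P.map (algebraMap ℝ ℂ))) ψ⟫_ℂ).re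
      = ∑ i, P.eval (lam i) * ‖⟪v i, ψ⟫_ℂ‖ ^ 2 := by
    have h1 : (Polynomial.aeval H (P.map (algebraMap ℝ ℂ))) ψ
        = ∑ i, ⟪v i, ψ⟫_ℂ • (((P.eval (lam i) : ℝ) : ℂ) • v i) := by
      conv_lhs => rw [← v.sum_repr' ψ]
      rw [map_sum]
      exact Finset.sum_congr rfl fun i _ => by rw [map_smul, hPv]
    rw [h1, inner_sum, Complex.re_sum]
    refine Finset.sum_congr rfl fun i _ => ?_
    rw [inner_smul_right, inner_smul_right]
    have h2 : ⟪v i, ψ⟫_ℂ * ⟪ψ, v i⟫_ℂ = ((‖⟪v i, ψ⟫_ℂ‖ ^ 2 : ℝ) : ℂ) := by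
      rw [← inner_conj_symm ψ (v i), Complex.mul_conj, Complex.normSq_eq_norm_sq]
    rw [mul_left_comm, h2, ← Complex.ofReal_mul, Complex.ofReal_re]
  have hsum : ∑ i, ‖⟪v i, ψ⟫_ℂ‖ ^ 2 = 1 := by
    rw [v.sum_sq_norm_inner_right, hψ, one_pow]
  have hlow : ∀ i, -η ≤ P.eval (lam i) := by
    intro i
    rcases le_or_gt (lam i) (c - Δ / 2) with h | h
    · have := (hP₁ _ ⟨(hspec i).1, h⟩).1
      linarith
    · have h' : c + Δ / 2 ≤ lam i := by
        by_contra hc'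
        exact hgap i ⟨h, not_le.mp hc'⟩
      exact (hP₂ _ ⟨h', (hspec i).2⟩).1
  have h0 : 1 - η ≤ P.eval (lam i₀) := (hP₁ _ ⟨(hspec i₀).1, hi₀⟩).1
  have hs : (P.eval (lam i₀) + η) * ‖⟪v i₀, ψ⟫_ℂ‖ ^ 2
      ≤ ∑ i, (P.eval (lam i) + η) * ‖⟪v i, ψ⟫_ℂ‖ ^ 2 :=
    Finset.single_le_sum (f := fun i => (P.eval (lam i) + η) * ‖⟪v i, ψ⟫_ℂ‖ ^ 2)
      (fun i _ => mul_nonneg (by linarith [hlow i]) (sq_nonneg _)) (Finset.mem_univ i₀)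
  simp only [add_mul, Finset.sum_add_distrib, ← Finset.mul_sum, hsum] at hs
  rw [hexp, hχ]
  nlinarith [mul_le_mul_of_nonneg_right h0 (sq_nonneg ‖⟪v i₀, ψ⟫_ℂ‖)]
end

section
/- Let E be a finite-dimensional complex inner product space, H : E → E a self-adjoint linear operator all of whose eigenvalues lie in [-1, 1], and ψ ∈ E. Then for every natural number k, the Chebyshev vector t_k = T_k(H)ψ satisfies ‖t_k‖ ≤ ‖ψ‖; in particular the norms of the Chebyshev vectors do not grow with k. -/
open scoped InnerProductSpace

/-- If `H` is self-adjoint on a finite-dimensional complex inner product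
space with all eigenvalues in `[-1, 1]`, then for every `k` the Chebyshev vector
`t_k = T_k(H)ψ` satisfies `‖t_k‖ ≤ ‖ψ‖`. -/
theorem chebyshev_vector_norm_le
    {E : Type*} [NormedAddCommGroup E] [InnerProductSpace ℂ E] [FiniteDimensional ℂ E]
    (H : E →ₗ[ℂ] E) (hH : ∀ x y : E, ⟪H x, y⟫_ℂ = ⟪x, H y⟫_ℂ)
    (hspec : ∀ μ : ℝ, Module.End.HasEigenvalue H (μ : ℂ) → μ ∈ Set.Icc (-1 : ℝ) 1)
    (ψ : E) (k : ℕ) :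
    ‖(Polynomial.aeval H ((Polynomial.Chebyshev.T ℝ k).map (algebraMap ℝ ℂ))) ψ‖ ≤ ‖ψ‖ := by
  have hT : H.IsSymmetric := hH
  set b := hT.eigenvectorBasis rfl with hb
  set p := (Polynomial.Chebyshev.T ℝ k).map (algebraMap ℝ ℂ) with hp
  have h1 : ∀ i, Polynomial.aeval H p (b i)
      = (((Polynomial.Chebyshev.T ℝ k).eval (hT.eigenvalues rfl i) : ℝ) : ℂ) • b i := by
    intro i
    rw [Module.End.aeval_apply_of_hasEigenvector (hT.hasEigenvector_eigenvectorBasis rfl i), hp,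
      Polynomial.eval_map_algebraMap]
    congr 1
    exact Polynomial.aeval_algebraMap_apply_eq_algebraMap_eval _ _
  have h2 : ∀ i, ⟪b i, Polynomial.aeval H p ψ⟫_ℂ
      = (((Polynomial.Chebyshev.T ℝ k).eval (hT.eigenvalues rfl i) : ℝ) : ℂ) * ⟪b i, ψ⟫_ℂ := by
    intro i
    conv_lhs => rw [← b.sum_repr' ψ]
    simp only [map_sum, map_smul, h1, inner_sum, inner_smul_right,
      orthonormal_iff_ite.mp b.orthonormal]
    simp [mul_comm]
  refine (sq_le_sq₀ (norm_nonneg _) (norm_nonneg _)).mp ?_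
  rw [← b.sum_sq_norm_inner_right, ← b.sum_sq_norm_inner_right]
  refine Finset.sum_le_sum fun i _ => ?_
  have h3 : |(Polynomial.Chebyshev.T ℝ k).eval (hT.eigenvalues rfl i)| ≤ 1 :=
    Polynomial.Chebyshev.abs_eval_T_real_le_one k
      (abs_le.mpr (hspec _ (hT.hasEigenvalue_eigenvalues rfl i)))
  rw [h2, norm_mul, Complex.norm_real, Real.norm_eq_abs]
  gcongr
  exact mul_le_of_le_one_left (norm_nonneg _) h3
end

section
/- Let E be a finite-dimensional complex inner product space, H : E → E a self-adjoint linear operator, ψ ∈ E a unit vector, and t_k = T_k(H)ψ the Chebyshev vectors. Let d be a natural number, let a₀, a₁, …, a_d be real coefficients with |a_k| ≤ 4/π for 1 ≤ k ≤ d, and set P = a₀/2 + Σ_{k=1}^d a_k T_k (a real polynomial). For arbitrary vectors t̃_1, …, t̃_d ∈ E with approximation errors Δ^{(k)} = ‖t_k - t̃_k‖, the approximate filter expectation satisfies |⟨ψ, P(H)ψ⟩ - a₀/2 - Σ_{k=1}^d a_k ⟨ψ, t̃_k⟩| ≤ (4/π) · Σ_{k=1}^d Δ^{(k)}. -/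
open scoped InnerProductSpace

/-- (Key estimate of Theorem 2.) For `H` self-adjoint, a unit vector `ψ`
with Chebyshev vectors `t_k = T_k(H)ψ`, real coefficients `a k` with `|a k| ≤ 4/π` for
`1 ≤ k ≤ d`, the polynomial `P = a₀/2 + Σ_{k=1}^d a_k T_k`, and arbitrary approximate
vectors `t̃_k` with errors `Δ^{(k)} = ‖t_k - t̃_k‖`, one has
`|⟨ψ, P(H)ψ⟩ - a₀/2 - Σ_{k=1}^d a_k ⟨ψ, t̃_k⟩| ≤ (4/π) Σ_{k=1}^d Δ^{(k)}`. -/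
theorem approximate_filter_expectation_error
    {E : Type*} [NormedAddCommGroup E] [InnerProductSpace ℂ E] [FiniteDimensional ℂ E]
    (H : E →ₗ[ℂ] E) (hH : ∀ x y : E, ⟪H x, y⟫_ℂ = ⟪x, H y⟫_ℂ)
    (ψ : E) (hψ : ‖ψ‖ = 1)
    (t : ℕ → E)
    (ht : ∀ k : ℕ,
      t k = (Polynomial.aeval H ((Polynomial.Chebyshev.T ℝ k).map (algebraMap ℝ ℂ))) ψ)
    (d : ℕ) (a : ℕ → ℝ)
    (hcoef : ∀ k, 1 ≤ k → k ≤ d → |a k| ≤ 4 / Real.pi)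
    (P : Polynomial ℝ)
    (hPdef : P = Polynomial.C (a 0 / 2)
      + ∑ k ∈ Finset.Icc 1 d, Polynomial.C (a k) * Polynomial.Chebyshev.T ℝ k)
    (ttil : ℕ → E) (Δ : ℕ → ℝ) (hΔ : ∀ k, Δ k = ‖t k - ttil k‖) :
    ‖⟪ψ, (Polynomial.aeval H (P.map (algebraMap ℝ ℂ))) ψ⟫_ℂ
        - (a 0 / 2 : ℂ) - ∑ k ∈ Finset.Icc 1 d, (a k : ℂ) * ⟪ψ, ttil k⟫_ℂ‖
      ≤ (4 / Real.pi) * ∑ k ∈ Finset.Icc 1 d, Δ k := by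
  have hP : (Polynomial.aeval H (P.map (algebraMap ℝ ℂ))) ψ
      = ((a 0 / 2 : ℝ) : ℂ) • ψ + ∑ k ∈ Finset.Icc 1 d, (a k : ℂ) • t k := by
    rw [hPdef, Polynomial.map_add, Polynomial.map_sum, map_add, map_sum, LinearMap.add_apply,
      LinearMap.sum_apply]
    congr 1
    · rw [Polynomial.map_C, Polynomial.aeval_C, Module.algebraMap_end_apply]
      rfl
    · refine Finset.sum_congr rfl fun k _ => ?_
      rw [Polynomial.map_mul, Polynomial.map_C, map_mul, Polynomial.aeval_C, ht k,
        Module.End.mul_apply, Module.algebraMap_end_apply]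
      rfl
  have hψψ : ⟪ψ, ψ⟫_ℂ = 1 := by
    rw [inner_self_eq_norm_sq_to_K, hψ]; simp
  have key : ⟪ψ, (Polynomial.aeval H (P.map (algebraMap ℝ ℂ))) ψ⟫_ℂ
        - (a 0 / 2 : ℂ) - ∑ k ∈ Finset.Icc 1 d, (a k : ℂ) * ⟪ψ, ttil k⟫_ℂ
      = ∑ k ∈ Finset.Icc 1 d, (a k : ℂ) * ⟪ψ, t k - ttil k⟫_ℂ := by
    rw [hP, inner_add_right, inner_sum, inner_smul_right, hψψ]
    simp only [inner_smul_right, inner_sub_right, mul_sub, Finset.sum_sub_distrib]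
    push_cast
    ring
  rw [key, Finset.mul_sum]
  refine (norm_sum_le _ _).trans (Finset.sum_le_sum fun k hk => ?_)
  rw [Finset.mem_Icc] at hk
  rw [norm_mul, Complex.norm_real, Real.norm_eq_abs, hΔ]
  have h1 : ‖⟪ψ, t k - ttil k⟫_ℂ‖ ≤ ‖t k - ttil k‖ := by
    have h := norm_inner_le_norm (𝕜 := ℂ) ψ (t k - ttil k)
    rwa [hψ, one_mul] at h
  exact mul_le_mul (hcoef k hk.1 hk.2) h1 (norm_nonneg _) (by positivity)
end

section
/- Let V be a complex vector space (or module over a commutative ring), H : V → V a linear operator, and (η_k)_{k≥1} a sequence of vectors in V. Define the error sequence (e_k) by e₀ = 0, e₁ = η₁, and e_k = 2H e_{k-1} - e_{k-2} + η_k for k ≥ 2. Then for every k ≥ 1, e_k = Σ_{j=1}^k U_{k-j}(H) η_j, where U_m denotes the m-th Chebyshev polynomial of the second kind applied to H via the polynomial functional calculus. -/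
/-- (Closed form of the Chebyshev error recurrence.) Over a module `V`
over a commutative ring `R`, with `H : V → V` linear and local errors `η_k`, the error
sequence `e₀ = 0`, `e₁ = η₁`, `e_k = 2H e_{k-1} - e_{k-2} + η_k` (k ≥ 2) satisfies
`e_k = Σ_{j=1}^k U_{k-j}(H) η_j` for all `k ≥ 1`. -/
theorem chebyshev_error_recurrence_closed_form
    {R : Type*} [CommRing R] {V : Type*} [AddCommGroup V] [Module R V]
    (H : V →ₗ[R] V) (η : ℕ → V) (e : ℕ → V)
    (he0 : e 0 = 0) (he1 : e 1 = η 1)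
    (hrec : ∀ k : ℕ, 2 ≤ k → e k = 2 • H (e (k - 1)) - e (k - 2) + η k) :
    ∀ k : ℕ, 1 ≤ k →
      e k = ∑ j ∈ Finset.Icc 1 k,
        (Polynomial.aeval H (Polynomial.Chebyshev.U R ((k - j : ℕ) : ℤ))) (η j) := by
  have key : ∀ k : ℕ, e k = ∑ j ∈ Finset.Icc 1 k,
        (Polynomial.aeval H (Polynomial.Chebyshev.U R ((k - j : ℕ) : ℤ))) (η j) := by
    intro k
    induction k using Nat.twoStepInduction with
    | zero => simp [he0]
    | one => simp [he1]
    | more n ih0 ih1 =>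
      have h := hrec (n + 2) (by omega)
      have a1 : n + 2 - 1 = n + 1 := by omega
      have a2 : n + 2 - 2 = n := by omega
      rw [a1, a2, ih0, ih1] at h
      have hs : ∑ j ∈ Finset.Icc 1 n,
          (Polynomial.aeval H (Polynomial.Chebyshev.U R ((n + 2 - j : ℕ) : ℤ))) (η j)
          = 2 • H (∑ j ∈ Finset.Icc 1 n,
          (Polynomial.aeval H (Polynomial.Chebyshev.U R ((n + 1 - j : ℕ) : ℤ))) (η j))
          - ∑ j ∈ Finset.Icc 1 n,
          (Polynomial.aeval H (Polynomial.Chebyshev.U R ((n - j : ℕ) : ℤ))) (η j) := by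
        rw [map_sum, Finset.smul_sum, ← Finset.sum_sub_distrib]
        refine Finset.sum_congr rfl fun j hj => ?_
        have hj' := (Finset.mem_Icc.mp hj).2
        obtain ⟨m, rfl⟩ := Nat.exists_eq_add_of_le hj'
        have b2 : j + m + 2 - j = m + 2 := by omega
        have b1 : j + m + 1 - j = m + 1 := by omega
        have b0 : j + m - j = m := by omega
        rw [b2, b1, b0]
        push_cast
        rw [Polynomial.Chebyshev.U_add_two, two_mul, add_mul]
        simp [two_smul]
      rw [h, Finset.sum_Icc_succ_top (by omega : 1 ≤ n + 1 + 1),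
        Finset.sum_Icc_succ_top (by omega : 1 ≤ n + 1),
        Finset.sum_Icc_succ_top (by omega : 1 ≤ n + 1), hs]
      have c : n + 2 - (n + 1) = 1 := by omega
      rw [c]
      simp only [Nat.sub_self, Nat.cast_zero, Nat.cast_one, Polynomial.Chebyshev.U_zero,
        Polynomial.Chebyshev.U_one, two_mul, two_smul, map_add, map_one, Polynomial.aeval_X,
        Module.End.one_apply, LinearMap.add_apply]
      abel
  exact fun k _ => key k
end

section
/- Let E be a finite-dimensional complex inner product space, H : E → E a self-adjoint linear operator all of whose eigenvalues lie in [-1, 1], and (η_k)_{k≥1} a sequence of vectors in E. Define the error sequence (e_k) by e₀ = 0, e₁ = η₁, and e_k = 2H e_{k-1} - e_{k-2} + η_k for k ≥ 2. Then for every k ≥ 1, ‖e_k‖ ≤ Σ_{j=1}^k (k - j + 1) · ‖η_j‖; in particular, if ‖η_j‖ ≤ δ for all j, then ‖e_k‖ ≤ δ · k(k+1)/2. -/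
open scoped InnerProductSpace

open Polynomial in
lemma cheb_U_bound (x : ℝ) (hx : |x| ≤ 1) (n : ℕ) :
    |(Chebyshev.U ℝ ((n : ℤ) - 1)).eval x| ≤ n := by
  induction n with
  | zero => simp
  | succ n ih =>
    have h := Chebyshev.U_eq_X_mul_U_add_T ℝ ((n : ℤ) - 1)
    have e1 : ((n + 1 : ℕ) : ℤ) - 1 = (n : ℤ) - 1 + 1 := by push_cast; ring
    rw [e1, h]
    simp only [eval_add, eval_mul, eval_X]
    have hT := Chebyshev.abs_eval_T_real_le_one ((n : ℤ) - 1 + 1) hx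
    have h2 := abs_add_le (x * (Chebyshev.U ℝ ((n : ℤ) - 1)).eval x)
      ((Chebyshev.T ℝ ((n : ℤ) - 1 + 1)).eval x)
    rw [abs_mul] at h2
    have h3 := mul_le_of_le_one_left
      (abs_nonneg ((Chebyshev.U ℝ ((n : ℤ) - 1)).eval x)) hx
    push_cast
    linarith

/-- The shifted operator `U_{n-1}(H)`. -/
noncomputable def chebW {E : Type*} [NormedAddCommGroup E] [InnerProductSpace ℂ E]
    (H : E →ₗ[ℂ] E) (n : ℕ) : E →ₗ[ℂ] E :=
  Polynomial.aeval (R := ℂ) (A := Module.End ℂ E) H (Polynomial.Chebyshev.U ℂ ((n : ℤ) - 1))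

section
variable {E : Type*} [NormedAddCommGroup E] [InnerProductSpace ℂ E]

lemma chebW_zero (H : E →ₗ[ℂ] E) : chebW H 0 = 0 := by simp [chebW]

lemma chebW_one (H : E →ₗ[ℂ] E) (v : E) : chebW H 1 v = v := by simp [chebW]

lemma chebW_rec (H : E →ₗ[ℂ] E) (n : ℕ) (v : E) :
    chebW H (n + 2) v = 2 • H (chebW H (n + 1) v) - chebW H n v := by
  have e1 : ((n + 2 : ℕ) : ℤ) - 1 = (n : ℤ) - 1 + 2 := by push_cast; ring
  have e2 : ((n + 1 : ℕ) : ℤ) - 1 = (n : ℤ) - 1 + 1 := by push_cast; ring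
  unfold chebW
  rw [e1, e2, Polynomial.Chebyshev.U_add_two]
  have : (2 : Polynomial ℂ) = Polynomial.C 2 := rfl
  rw [this]
  simp only [map_sub, map_mul, Polynomial.aeval_X, Polynomial.aeval_C, LinearMap.sub_apply,
    Module.End.mul_apply, Module.algebraMap_end_apply]
  rw [two_smul, two_smul]

lemma chebW_norm [FiniteDimensional ℂ E] (H : E →ₗ[ℂ] E) (hH : H.IsSymmetric)
    (hspec : ∀ μ : ℝ, Module.End.HasEigenvalue H (μ : ℂ) → μ ∈ Set.Icc (-1 : ℝ) 1)
    (n : ℕ) (v : E) : ‖chebW H n v‖ ≤ n * ‖v‖ := by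
  have hn : Module.finrank ℂ E = Module.finrank ℂ E := rfl
  let b := hH.eigenvectorBasis hn
  let l := hH.eigenvalues hn
  have hl : ∀ i, |l i| ≤ 1 := fun i =>
    abs_le.mpr (hspec _ (hH.hasEigenvalue_eigenvalues hn i))
  have key : ∀ m : ℕ, ∀ i, b.repr (chebW H m v) i =
      (((Polynomial.Chebyshev.U ℝ ((m : ℤ) - 1)).eval (l i) : ℝ) : ℂ) * b.repr v i := by
    intro m i
    induction m using Nat.twoStepInduction with
    | zero => simp [chebW_zero]
    | one => simp [chebW_one]
    | more m h1 h2 =>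
      have e1 : ((m + 2 : ℕ) : ℤ) - 1 = (m : ℤ) - 1 + 2 := by push_cast; ring
      have e2 : ((m + 1 : ℕ) : ℤ) - 1 = (m : ℤ) - 1 + 1 := by push_cast; ring
      have h3 : b.repr (H (chebW H (m + 1) v)) i = (l i : ℂ) * b.repr (chebW H (m + 1) v) i :=
        hH.eigenvectorBasis_apply_self_apply hn _ i
      rw [e2] at h2
      rw [chebW_rec, two_smul, map_sub, map_add, e1, Polynomial.Chebyshev.U_add_two]
      simp only [PiLp.sub_apply, PiLp.add_apply, h3, h1, h2, Polynomial.eval_sub,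
        Polynomial.eval_mul, Polynomial.eval_X, Polynomial.eval_ofNat]
      push_cast
      ring
  have h0 : (0 : ℝ) ≤ n * ‖v‖ := by positivity
  refine le_of_sq_le_sq ?_ h0
  rw [mul_pow, ← b.repr.norm_map, ← b.repr.norm_map v, EuclideanSpace.norm_sq_eq,
    EuclideanSpace.norm_sq_eq, Finset.mul_sum]
  refine Finset.sum_le_sum fun i _ => ?_
  rw [key, norm_mul, mul_pow, Complex.norm_real, Real.norm_eq_abs]
  gcongr
  exact cheb_U_bound _ (hl i) n

lemma cheb_expand (H : E →ₗ[ℂ] E) (η : ℕ → E) (e : ℕ → E)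
    (he0 : e 0 = 0) (he1 : e 1 = η 1)
    (hrec : ∀ k : ℕ, 2 ≤ k → e k = 2 • H (e (k - 1)) - e (k - 2) + η k) (n : ℕ) :
    e n = ∑ j ∈ Finset.range n, chebW H (n - j) (η (j + 1)) := by
  induction n using Nat.twoStepInduction with
  | zero => simp [he0]
  | one => simp [he1, chebW_one]
  | more n h1 h2 =>
    rw [hrec (n + 2) (by omega)]
    have a1 : n + 2 - 1 = n + 1 := by omega
    have a2 : n + 2 - 2 = n := by omega
    rw [a1, a2, h1, h2, Finset.sum_range_succ _ (n + 1), Finset.sum_range_succ _ n,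
      Finset.sum_range_succ _ n]
    have b1 : n + 2 - (n + 1) = 1 := by omega
    have b2 : n + 2 - n = 0 + 2 := by omega
    have b3 : n + 1 - n = 1 := by omega
    have c : ∀ j ∈ Finset.range n, chebW H (n + 2 - j) (η (j + 1)) =
        2 • H (chebW H (n + 1 - j) (η (j + 1))) - chebW H (n - j) (η (j + 1)) := by
      intro j hj
      have hj' := Finset.mem_range.mp hj
      have d1 : n + 2 - j = (n - j) + 2 := by omega
      have d2 : n + 1 - j = (n - j) + 1 := by omega
      rw [d1, d2, chebW_rec]
    rw [b1, b2, b3, Finset.sum_congr rfl c, chebW_rec, Finset.sum_sub_distrib,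
      ← Finset.smul_sum, map_add, map_sum]
    simp only [zero_add, chebW_one, chebW_zero, LinearMap.zero_apply, smul_add]
    abel
end

/-- (Worst-case accumulation of local truncation errors.) For `H`
self-adjoint with all eigenvalues in `[-1, 1]` and local errors `η_k`, the error sequence
`e₀ = 0`, `e₁ = η₁`, `e_k = 2H e_{k-1} - e_{k-2} + η_k` (k ≥ 2) satisfies
`‖e_k‖ ≤ Σ_{j=1}^k (k - j + 1)‖η_j‖` for all `k ≥ 1`; in particular, if `‖η_j‖ ≤ δ` for
all `j`, then `‖e_k‖ ≤ δ k(k+1)/2`. -/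
theorem chebyshev_error_accumulation_bound
    {E : Type*} [NormedAddCommGroup E] [InnerProductSpace ℂ E] [FiniteDimensional ℂ E]
    (H : E →ₗ[ℂ] E) (hH : ∀ x y : E, ⟪H x, y⟫_ℂ = ⟪x, H y⟫_ℂ)
    (hspec : ∀ μ : ℝ, Module.End.HasEigenvalue H (μ : ℂ) → μ ∈ Set.Icc (-1 : ℝ) 1)
    (η : ℕ → E) (e : ℕ → E)
    (he0 : e 0 = 0) (he1 : e 1 = η 1)
    (hrec : ∀ k : ℕ, 2 ≤ k → e k = 2 • H (e (k - 1)) - e (k - 2) + η k) :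
    (∀ k : ℕ, 1 ≤ k →
        ‖e k‖ ≤ ∑ j ∈ Finset.Icc 1 k, ((k : ℝ) - (j : ℝ) + 1) * ‖η j‖)
      ∧ ∀ δ : ℝ, (∀ j : ℕ, ‖η j‖ ≤ δ) → ∀ k : ℕ, 1 ≤ k →
          ‖e k‖ ≤ δ * (k * (k + 1)) / 2 := by
  have part1 : ∀ k : ℕ, ‖e k‖ ≤ ∑ j ∈ Finset.range k, ((k : ℝ) - j) * ‖η (j + 1)‖ := by
    intro k
    rw [cheb_expand H η e he0 he1 hrec k]
    refine (norm_sum_le _ _).trans (Finset.sum_le_sum fun j hj => ?_)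
    have := chebW_norm H hH hspec (k - j) (η (j + 1))
    rwa [Nat.cast_sub (Finset.mem_range.mp hj).le] at this
  refine ⟨fun k _ => (part1 k).trans (le_of_eq ?_), fun δ hδ k _ => (part1 k).trans ?_⟩
  · rw [Finset.range_eq_Ico, ← Finset.Ico_add_one_right_eq_Icc,
      ← Finset.sum_Ico_add' (fun j : ℕ => ((k : ℝ) - (j : ℝ) + 1) * ‖η j‖) 0 k 1]
    refine Finset.sum_congr rfl fun j _ => ?_
    push_cast
    ring
  · have h1 : ∑ j ∈ Finset.range k, ((k : ℝ) - j) * ‖η (j + 1)‖ ≤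
        ∑ j ∈ Finset.range k, ((k : ℝ) - j) * δ := by
      refine Finset.sum_le_sum fun j hj => ?_
      have : (j : ℝ) ≤ k := by exact_mod_cast (Finset.mem_range.mp hj).le
      exact mul_le_mul_of_nonneg_left (hδ _) (by linarith)
    refine h1.trans (le_of_eq ?_)
    have h2 : ∀ m : ℕ, ∑ j ∈ Finset.range m, ((k : ℝ) - j) * δ
        = δ * (m * k - m * (m - 1) / 2) := by
      intro m
      induction m with
      | zero => simp
      | succ m ih => rw [Finset.sum_range_succ, ih]; push_cast; ring
    rw [h2]; ring
end

section
/- Let E be a finite-dimensional complex inner product space, H : E → E a self-adjoint linear operator all of whose eigenvalues lie in [-1, 1], and (η_k)_{k≥1} a sequence of vectors in E with a uniform local error bound ‖η_k‖ ≤ δ for all k. Define the error sequence (e_k) by e₀ = 0, e₁ = η₁, and e_k = 2H e_{k-1} - e_{k-2} + η_k for k ≥ 2. Let d ≥ 1 be a natural number and χ > 0 a real number. If δ ≤ 3πχ² / (16 · d(d+1)(d+2)), then the accumulated global error satisfies Σ_{k=1}^d ‖e_k‖ ≤ (π/32) · χ². -/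
open scoped InnerProductSpace

theorem exists_unitary_split
    {E : Type*} [NormedAddCommGroup E] [InnerProductSpace ℂ E] [FiniteDimensional ℂ E]
    (H : E →ₗ[ℂ] E) (hH : H.IsSymmetric)
    (hspec : ∀ μ : ℝ, Module.End.HasEigenvalue H (μ : ℂ) → μ ∈ Set.Icc (-1 : ℝ) 1) :
    ∃ V W : E →ₗ[ℂ] E, (∀ x, V x + W x = 2 • H x) ∧ (∀ x, W (V x) = x) ∧
      (∀ x, ‖V x‖ = ‖x‖) ∧ (∀ x, ‖W x‖ = ‖x‖) := by
  have hn : Module.finrank ℂ E = Module.finrank ℂ E := rfl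
  let b := hH.eigenvectorBasis hn
  let l := hH.eigenvalues hn
  have hl : ∀ i, l i ∈ Set.Icc (-1 : ℝ) 1 := fun i => hspec _ (hH.hasEigenvalue_eigenvalues hn i)
  have hD : ∀ v : Fin (Module.finrank ℂ E) → ℂ, ∃ V : E →ₗ[ℂ] E,
      (∀ i, V (b i) = v i • b i) ∧ ((∀ i, ‖v i‖ = 1) → ∀ x, ‖V x‖ = ‖x‖) := by
    intro v
    let V : E →ₗ[ℂ] E := b.toBasis.constr ℂ (fun i => v i • b i)
    have h1 : ∀ i, V (b i) = v i • b i := by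
      intro i
      have := b.toBasis.constr_basis ℂ (fun i => v i • b i) i
      simpa [V] using this
    refine ⟨V, h1, fun hv x => ?_⟩
    have h2 : ∀ i, b.repr (V x) i = v i * b.repr x i := by
      intro i
      conv_lhs => rw [← b.sum_repr x]
      simp [h1, Finset.sum_apply, Pi.single_apply, mul_comm]
    rw [← b.repr.norm_map (V x), ← b.repr.norm_map x, EuclideanSpace.norm_eq,
      EuclideanSpace.norm_eq]
    simp [h2, hv]
  let v : Fin (Module.finrank ℂ E) → ℂ := fun i => ⟨l i, Real.sqrt (1 - l i ^ 2)⟩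
  have hsq : ∀ i, Real.sqrt (1 - l i ^ 2) * Real.sqrt (1 - l i ^ 2) = 1 - l i ^ 2 := by
    intro i
    apply Real.mul_self_sqrt
    have := hl i
    nlinarith [this.1, this.2]
  have hv : ∀ i, ‖v i‖ = 1 := by
    intro i
    rw [Complex.norm_def, Complex.normSq_apply]
    simp only [v]
    rw [hsq]
    ring_nf
    simp
  obtain ⟨V, hV, hVn⟩ := hD v
  obtain ⟨W, hW, hWn⟩ := hD (fun i => starRingEnd ℂ (v i))
  refine ⟨V, W, ?_, ?_, hVn hv, hWn (by simpa using hv)⟩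
  · have : V + W = 2 • H := by
      apply b.toBasis.ext
      intro i
      have h3 : H (b i) = (l i : ℂ) • b i := hH.apply_eigenvectorBasis hn i
      simp only [OrthonormalBasis.coe_toBasis, LinearMap.add_apply, LinearMap.smul_apply, hV, hW,
        h3]
      rw [← add_smul, Complex.add_conj, ← Nat.cast_smul_eq_nsmul ℂ, smul_smul]
      simp [v]
    intro x
    exact LinearMap.congr_fun this x
  · have : W ∘ₗ V = LinearMap.id := by
      apply b.toBasis.ext
      intro i
      simp only [OrthonormalBasis.coe_toBasis, LinearMap.comp_apply, hV, hW, map_smul, smul_smul,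
        Complex.mul_conj, Complex.normSq_eq_norm_sq, hv]
      simp
    intro x
    exact LinearMap.congr_fun this x

/-- (Precise form of the paper's Theorem 3.) For `H` self-adjoint with
all eigenvalues in `[-1, 1]`, local truncation errors `η_k` uniformly bounded by `δ`, and
error sequence `e₀ = 0`, `e₁ = η₁`, `e_k = 2H e_{k-1} - e_{k-2} + η_k` (k ≥ 2): if
`d ≥ 1`, `χ > 0`, and `δ ≤ 3πχ²/(16 d(d+1)(d+2))`, then
`Σ_{k=1}^d ‖e_k‖ ≤ (π/32)χ²`. -/
theorem truncation_error_global_accuracy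
    {E : Type*} [NormedAddCommGroup E] [InnerProductSpace ℂ E] [FiniteDimensional ℂ E]
    (H : E →ₗ[ℂ] E) (hH : ∀ x y : E, ⟪H x, y⟫_ℂ = ⟪x, H y⟫_ℂ)
    (hspec : ∀ μ : ℝ, Module.End.HasEigenvalue H (μ : ℂ) → μ ∈ Set.Icc (-1 : ℝ) 1)
    (δ : ℝ) (η : ℕ → E) (hη : ∀ k : ℕ, ‖η k‖ ≤ δ)
    (e : ℕ → E)
    (he0 : e 0 = 0) (he1 : e 1 = η 1)
    (hrec : ∀ k : ℕ, 2 ≤ k → e k = 2 • H (e (k - 1)) - e (k - 2) + η k)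
    (d : ℕ) (hd : 1 ≤ d) (χ : ℝ) (hχ : 0 < χ)
    (hδ : δ ≤ 3 * Real.pi * χ ^ 2 / (16 * (d * (d + 1) * (d + 2)))) :
    ∑ k ∈ Finset.Icc 1 d, ‖e k‖ ≤ Real.pi / 32 * χ ^ 2 := by
  obtain ⟨V, W, hVW, hWV, hV, hW⟩ := exists_unitary_split H hH hspec
  have hf : ∀ k : ℕ, ‖e (k + 1) - V (e k)‖ ≤ (k + 1) * δ := by
    intro k
    induction k with
    | zero => simpa [he0, he1] using hη 1
    | succ k ih =>
      have h1 : e (k + 2) - V (e (k + 1)) = W (e (k + 1) - V (e k)) + η (k + 2) := by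
        have h := hrec (k + 2) (by omega)
        have h2 : k + 2 - 1 = k + 1 := by omega
        rw [h2, Nat.add_sub_cancel, ← hVW] at h
        rw [h, map_sub, hWV]
        abel
      have h3 := norm_add_le (W (e (k + 1) - V (e k))) (η (k + 2))
      rw [← h1, hW] at h3
      have := hη (k + 2)
      push_cast
      show ‖e (k + 2) - V (e (k + 1))‖ ≤ _
      linarith
  have hk : ∀ k : ℕ, ‖e k‖ ≤ k * (k + 1) / 2 * δ := by
    intro k
    induction k with
    | zero => simp [he0]
    | succ k ih =>
      have h3 := norm_add_le (e (k + 1) - V (e k)) (V (e k))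
      rw [sub_add_cancel, hV] at h3
      have := hf k
      push_cast
      linarith
  have hs : ∀ n : ℕ, ∑ k ∈ Finset.Icc 1 n, ‖e k‖ ≤ n * (n + 1) * (n + 2) / 6 * δ := by
    intro n
    induction n with
    | zero => simp
    | succ n ih =>
      rw [Finset.sum_Icc_succ_top (by omega)]
      have := hk (n + 1)
      push_cast at this ⊢
      linarith
  refine (hs d).trans ?_
  have hd' : (0 : ℝ) < d := by exact_mod_cast hd
  rw [le_div_iff₀ (by positivity)] at hδ
  linarith
end
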